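/- arXiv:2602.08423 — 5 statements merged into one kernel-verified Lean document; each statement's English description precedes it below -/
import Mathlib

section
/- Correctness of the 1G (one-variable greater-than) SAT encoding: let G be a finite simple graph on vertex set V with symmetric positive integer edge weights d, and let k ≥ 1 be an integer. The following are equivalent: (i) there exists a valid coloring with span bound k; (ii) there exists a map y : V → ℤ → Bool satisfying all of: (boundary) y(u,j) = true for every vertex u and every integer j ≤ 1, and y(u,j) = false for every j > k; (ordering) for every vertex u and every integer j, y(u,j) implies y(u,j−1); (distance) for every ordered pair (u,v) of adjacent vertices and every integer j with 1 ≤ j ≤ k, y(u,j) implies y(u,j+1) ∨ ¬y(v, j−d(u,v)+1) ∨ y(v, j+d(u,v)). Moreover, from any such y a valid coloring is obtained by setting c(u) equal to the largest j with y(u,j) = true. -/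
/-- A valid coloring of a BCP instance `(G, d)` with span bound `k`:
every vertex gets a color in `[1, k]`, and adjacent vertices `u, v`
satisfy the distance constraint `|c u - c v| ≥ d u v`. -/
def ValidColoring {V : Type*} (G : SimpleGraph V) (d : V → V → ℤ) (k : ℤ)
    (c : V → ℤ) : Prop :=
  (∀ v, 1 ≤ c v ∧ c v ≤ k) ∧ ∀ u v, G.Adj u v → |c u - c v| ≥ d u v

/-- The constraints of the 1G (one-variable greater-than) encoding with
span bound `k`: boundary, ordering, and distance clauses. -/
def OneG {V : Type*} (G : SimpleGraph V) (d : V → V → ℤ) (k : ℤ)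
    (y : V → ℤ → Bool) : Prop :=
  (∀ u : V, ∀ j : ℤ, j ≤ 1 → y u j = true) ∧
  (∀ u : V, ∀ j : ℤ, k < j → y u j = false) ∧
  (∀ u : V, ∀ j : ℤ, y u j = true → y u (j - 1) = true) ∧
  (∀ u v : V, G.Adj u v → ∀ j : ℤ, 1 ≤ j → j ≤ k →
    y u j = true →
      (y u (j + 1) = true ∨ y v (j - d u v + 1) = false ∨ y v (j + d u v) = true))

theorem correctness_1G_encoding {V : Type*} [Fintype V]
    (G : SimpleGraph V) (d : V → V → ℤ)
    (hdpos : ∀ u v, G.Adj u v → 1 ≤ d u v)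
    (hdsymm : ∀ u v, d u v = d v u)
    (k : ℤ) (hk : 1 ≤ k) :
    ((∃ c : V → ℤ, ValidColoring G d k c) ↔ ∃ y : V → ℤ → Bool, OneG G d k y) ∧
    (∀ y : V → ℤ → Bool, OneG G d k y →
      ∀ c : V → ℤ, (∀ u : V, IsGreatest {j : ℤ | y u j = true} (c u)) →
        ValidColoring G d k c) := by
  have key : ∀ y : V → ℤ → Bool, OneG G d k y →
      ∀ c : V → ℤ, (∀ u : V, IsGreatest {j : ℤ | y u j = true} (c u)) →
        ValidColoring G d k c := by
    rintro y ⟨h1, h2, h3, h4⟩ c hc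
    have hmem : ∀ u, y u (c u) = true := fun u => (hc u).1
    have hub : ∀ u j, y u j = true → j ≤ c u := fun u j h => (hc u).2 h
    have hdown : ∀ u (n : ℕ), y u (c u - n) = true := by
      intro u n
      induction n with
      | zero => simpa using hmem u
      | succ n ih =>
        have := h3 u _ ih
        have e : c u - (n : ℤ) - 1 = c u - ((n + 1 : ℕ) : ℤ) := by push_cast; ring
        rwa [e] at this
    have hdown2 : ∀ u j, j ≤ c u → y u j = true := by
      intro u j hj
      have := hdown u (c u - j).toNat
      have e : c u - ((c u - j).toNat : ℤ) = j := by omega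
      rwa [e] at this
    have hk' : ∀ u, 1 ≤ c u ∧ c u ≤ k := by
      intro u
      refine ⟨hub u 1 (h1 u 1 le_rfl), ?_⟩
      by_contra hlt
      have := h2 u (c u) (by omega)
      rw [hmem u] at this
      exact absurd this (by decide)
    refine ⟨hk', ?_⟩
    intro u v huv
    rcases h4 u v huv (c u) (hk' u).1 (hk' u).2 (hmem u) with h | h | h
    · have := hub u _ h
      omega
    · have : c v < c u - d u v + 1 := by
        by_contra hge
        rw [hdown2 v _ (by omega)] at h
        exact absurd h (by decide)
      exact le_abs.2 (Or.inl (by omega))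
    · have := hub v _ h
      exact le_abs.2 (Or.inr (by omega))
  refine ⟨⟨?_, ?_⟩, key⟩
  · rintro ⟨c, hc, hd⟩
    refine ⟨fun u j => decide (j ≤ c u), ?_, ?_, ?_, ?_⟩
    · intro u j hj
      have := hc u
      simp only [decide_eq_true_eq]
      omega
    · intro u j hj
      have := hc u
      simp only [decide_eq_false_iff_not]
      omega
    · intro u j hj
      simp only [decide_eq_true_eq] at hj ⊢
      omega
    · intro u v huv j _ _ hj
      simp only [decide_eq_true_eq, decide_eq_false_iff_not] at hj ⊢
      rcases le_abs.1 (hd u v huv) with h | h <;> omega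
  · rintro ⟨y, hy⟩
    have hex : ∀ u, ∃ m : ℤ, IsGreatest {j : ℤ | y u j = true} m := by
      intro u
      obtain ⟨m, hm, hm'⟩ := Int.exists_greatest_of_bdd (P := fun j => y u j = true)
        ⟨k, fun z hz => by
          by_contra hlt
          have := hy.2.1 u z (by omega)
          rw [hz] at this
          exact absurd this (by decide)⟩ ⟨1, hy.1 u 1 le_rfl⟩
      exact ⟨m, hm, fun z hz => hm' z hz⟩
    choose c hc using hex
    exact ⟨c, key y hy c hc⟩
end

section
/- Correctness of the 2G (two-variable greater-than) SAT encoding: let G be a finite simple graph on vertex set V with symmetric positive integer edge weights d, and let k ≥ 1 be an integer. The following are equivalent: (i) there exists a valid coloring with span bound k; (ii) there exist maps x, y : V → ℤ → Bool satisfying all of: (boundary) y(u,j) = true for every vertex u and every integer j ≤ 1, and y(u,j) = false for every j > k; (ordering) for every vertex u and every integer j, y(u,j) implies y(u,j−1); (channeling) for every vertex u and every integer j with 1 ≤ j ≤ k, x(u,j) holds if and only if y(u,j) ∧ ¬y(u,j+1); (distance) for every ordered pair (u,v) of adjacent vertices and every integer j with 1 ≤ j ≤ k, x(u,j) implies ¬y(v,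 j−d(u,v)+1) ∨ y(v, j+d(u,v)). Moreover, from any such (x,y) a valid coloring is obtained by setting c(u) equal to the unique j in [1,k] with x(u,j) = true. -/
/-- The constraints of the 2G (two-variable greater-than) encoding with
span bound `k`: boundary, ordering, channeling, and distance clauses. -/
def TwoG {V : Type*} (G : SimpleGraph V) (d : V → V → ℤ) (k : ℤ)
    (x y : V → ℤ → Bool) : Prop :=
  (∀ u : V, ∀ j : ℤ, j ≤ 1 → y u j = true) ∧
  (∀ u : V, ∀ j : ℤ, k < j → y u j = false) ∧
  (∀ u : V, ∀ j : ℤ, y u j = true → y u (j - 1) = true) ∧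
  (∀ u : V, ∀ j : ℤ, 1 ≤ j → j ≤ k →
    (x u j = true ↔ (y u j = true ∧ y u (j + 1) = false))) ∧
  (∀ u v : V, G.Adj u v → ∀ j : ℤ, 1 ≤ j → j ≤ k →
    x u j = true →
      (y v (j - d u v + 1) = false ∨ y v (j + d u v) = true))

theorem correctness_2G_encoding {V : Type*} [Fintype V]
    (G : SimpleGraph V) (d : V → V → ℤ)
    (hdpos : ∀ u v, G.Adj u v → 1 ≤ d u v)
    (hdsymm : ∀ u v, d u v = d v u)
    (k : ℤ) (hk : 1 ≤ k) :
    ((∃ c : V → ℤ, ValidColoring G d k c) ↔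
      ∃ x y : V → ℤ → Bool, TwoG G d k x y) ∧
    (∀ x y : V → ℤ → Bool, TwoG G d k x y →
      ∀ c : V → ℤ,
        (∀ u : V, 1 ≤ c u ∧ c u ≤ k ∧ x u (c u) = true ∧
          (∀ j : ℤ, 1 ≤ j → j ≤ k → x u j = true → j = c u)) →
        ValidColoring G d k c) := by
  have key : ∀ x y : V → ℤ → Bool, TwoG G d k x y → ∀ c : V → ℤ,
      (∀ u, 1 ≤ c u ∧ c u ≤ k ∧ x u (c u) = true) → ValidColoring G d k c := by
    rintro x y ⟨h1, h2, h3, h4, h5⟩ c hc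
    have mono : ∀ u (n : ℕ) (j : ℤ), y u j = true → y u (j - n) = true := by
      intro u n
      induction n with
      | zero => intro j hj; simpa using hj
      | succ n ih =>
        intro j hj
        have := h3 u _ (ih j hj)
        rw [show j - ((n + 1 : ℕ) : ℤ) = j - n - 1 by push_cast; ring]
        exact this
    have mono' : ∀ u (i j : ℤ), i ≤ j → y u j = true → y u i = true := by
      intro u i j hij hj
      have := mono u (j - i).toNat j hj
      rwa [show j - ((j - i).toNat : ℤ) = i by omega] at this
    refine ⟨fun v => ⟨(hc v).1, (hc v).2.1⟩, fun u v huv => ?_⟩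
    obtain ⟨a1, a2, a3⟩ := hc u
    obtain ⟨b1, b2, b3⟩ := hc v
    obtain ⟨e1, e2⟩ := (h4 v _ b1 b2).1 b3
    rcases h5 u v huv _ a1 a2 a3 with h | h
    · have : c v < c u - d u v + 1 := by
        by_contra hcon
        have := mono' v _ _ (not_lt.1 hcon) e1
        simp [h] at this
      have := le_abs_self (c u - c v)
      omega
    · have : c u + d u v < c v + 1 := by
        by_contra hcon
        have := mono' v _ _ (not_lt.1 hcon) h
        simp [e2] at this
      have := neg_le_abs (c u - c v)
      omega
  refine ⟨⟨?_, ?_⟩, fun x y h c hc => key x y h c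
    fun u => ⟨(hc u).1, (hc u).2.1, (hc u).2.2.1⟩⟩
  · rintro ⟨c, hc, hd⟩
    refine ⟨fun u j => decide (j = c u), fun u j => decide (j ≤ c u), ?_, ?_, ?_, ?_, ?_⟩
    · intro u j hj
      have := hc u
      simp only [decide_eq_true_eq]; omega
    · intro u j hj
      have := hc u
      simp only [decide_eq_false_iff_not]; omega
    · intro u j hj
      simp only [decide_eq_true_eq] at *; omega
    · intro u j _ _
      simp only [decide_eq_true_eq, decide_eq_false_iff_not]; omega
    · intro u v huv j _ _ hj
      simp only [decide_eq_true_eq, decide_eq_false_iff_not] at *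
      have := hd u v huv
      rcases le_abs.1 this with h | h <;> omega
  · rintro ⟨x, y, h⟩
    have h' := h
    obtain ⟨h1, h2, h3, h4, h5⟩ := h'
    have ex : ∀ u, ∃ j : ℤ, 1 ≤ j ∧ j ≤ k ∧ x u j = true := by
      intro u
      have bd : ∀ z : ℤ, y u z = true → z ≤ k := by
        intro z hz
        by_contra hcon
        have := h2 u z (not_le.1 hcon)
        simp [hz] at this
      obtain ⟨m, hm, hmax⟩ := Int.exists_greatest_of_bdd (P := fun j => y u j = true)
        ⟨k, bd⟩ ⟨1, h1 u 1 le_rfl⟩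
      have m1 : 1 ≤ m := hmax 1 (h1 u 1 le_rfl)
      refine ⟨m, m1, bd m hm, (h4 u m m1 (bd m hm)).2 ⟨hm, ?_⟩⟩
      by_contra hcon
      have := hmax (m + 1) (by simpa using hcon)
      omega
    choose c hc using ex
    exact ⟨c, key x y h c hc⟩
end

section
/- Correctness of the 2L (two-variable less-than) SAT encoding: let G be a finite simple graph on vertex set V with symmetric positive integer edge weights d, and let k ≥ 1 be an integer. The following are equivalent: (i) there exists a valid coloring with span bound k; (ii) there exist maps x, y : V → ℤ → Bool satisfying all of: (boundary) y(u,j) = true for every vertex u and every integer j ≥ k, and y(u,j) = false for every j ≤ 0; (ordering) for every vertex u and every integer j, y(u,j) implies y(u,j+1); (channeling) for every vertex u and every integer j with 1 ≤ j ≤ k, x(u,j) holds if and only if y(u,j) ∧ ¬y(u,j−1); (distance) for every ordered pair (u,v) of adjacent vertices and every integer j with 1 ≤ j ≤ k, x(u,j) implies y(v, j−d(u,v)) ∨ ¬y(v, j+d(u,v)−1). Moreover, from any such (x,y) a valid coloring is obtained by setting c(u) equal to the unique j in [1,k] with x(u,j) = true. -/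
/-- The constraints of the 2L (two-variable less-than) encoding with
span bound `k`: boundary, ordering, channeling, and distance clauses. -/
def TwoL {V : Type*} (G : SimpleGraph V) (d : V → V → ℤ) (k : ℤ)
    (x y : V → ℤ → Bool) : Prop :=
  (∀ u : V, ∀ j : ℤ, k ≤ j → y u j = true) ∧
  (∀ u : V, ∀ j : ℤ, j ≤ 0 → y u j = false) ∧
  (∀ u : V, ∀ j : ℤ, y u j = true → y u (j + 1) = true) ∧
  (∀ u : V, ∀ j : ℤ, 1 ≤ j → j ≤ k →
    (x u j = true ↔ (y u j = true ∧ y u (j - 1) = false))) ∧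
  (∀ u v : V, G.Adj u v → ∀ j : ℤ, 1 ≤ j → j ≤ k →
    x u j = true →
      (y v (j - d u v) = true ∨ y v (j + d u v - 1) = false))

theorem twoL_mono {V : Type*} {y : V → ℤ → Bool}
    (h : ∀ u : V, ∀ j : ℤ, y u j = true → y u (j + 1) = true) (u : V) (i j : ℤ)
    (hij : i ≤ j) (hi : y u i = true) : y u j = true := by
  induction j, hij using Int.le_induction with
  | base => exact hi
  | succ n _ ih => exact h u n ih

theorem twoL_valid {V : Type*} {G : SimpleGraph V} {d : V → V → ℤ} {k : ℤ}
    {x y : V → ℤ → Bool} (h : TwoL G d k x y) (c : V → ℤ)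
    (hc : ∀ u : V, 1 ≤ c u ∧ c u ≤ k ∧ x u (c u) = true) : ValidColoring G d k c := by
  obtain ⟨h1, h2, h3, h4, h5⟩ := h
  have key : ∀ u j, y u j = true ↔ c u ≤ j := by
    intro u j
    obtain ⟨a, b, e⟩ := hc u
    obtain ⟨p, q⟩ := (h4 u (c u) a b).1 e
    constructor
    · intro hj
      by_contra hlt
      have := twoL_mono h3 u j (c u - 1) (by omega) hj
      simp [q] at this
    · intro hj
      exact twoL_mono h3 u _ _ hj p
  refine ⟨fun v => ⟨(hc v).1, (hc v).2.1⟩, fun u v huv => ?_⟩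
  obtain ⟨a, b, e⟩ := hc u
  rcases h5 u v huv (c u) a b e with h | h
  · rw [key] at h
    exact le_trans (by omega) (le_abs_self _)
  · rw [← Bool.not_eq_true, key] at h
    exact le_trans (by omega) (neg_le_abs _)

theorem correctness_2L_encoding {V : Type*} [Fintype V]
    (G : SimpleGraph V) (d : V → V → ℤ)
    (hdpos : ∀ u v, G.Adj u v → 1 ≤ d u v)
    (hdsymm : ∀ u v, d u v = d v u)
    (k : ℤ) (hk : 1 ≤ k) :
    ((∃ c : V → ℤ, ValidColoring G d k c) ↔
      ∃ x y : V → ℤ → Bool, TwoL G d k x y) ∧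
    (∀ x y : V → ℤ → Bool, TwoL G d k x y →
      ∀ c : V → ℤ,
        (∀ u : V, 1 ≤ c u ∧ c u ≤ k ∧ x u (c u) = true ∧
          (∀ j : ℤ, 1 ≤ j → j ≤ k → x u j = true → j = c u)) →
        ValidColoring G d k c) := by
  refine ⟨⟨?_, ?_⟩, fun x y h c hc => twoL_valid h c
    fun u => ⟨(hc u).1, (hc u).2.1, (hc u).2.2.1⟩⟩
  · rintro ⟨c, hc, hd⟩
    refine ⟨fun u j => decide (j = c u), fun u j => decide (c u ≤ j), ?_, ?_, ?_, ?_, ?_⟩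
    · intro u j hj
      have := hc u
      simp only [decide_eq_true_eq]; omega
    · intro u j hj
      have := hc u
      simp only [decide_eq_false_iff_not]; omega
    · intro u j
      simp only [decide_eq_true_eq]; omega
    · intro u j _ _
      simp only [decide_eq_true_eq, decide_eq_false_iff_not]; omega
    · intro u v huv j _ _
      have := hd u v huv
      simp only [decide_eq_true_eq, decide_eq_false_iff_not]
      rintro rfl
      rcases le_abs.1 this with h | h
      · left; omega
      · right; omega
  · rintro ⟨x, y, h⟩
    have ex : ∀ u, ∃ c : ℤ, 1 ≤ c ∧ c ≤ k ∧ x u c = true := by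
      intro u
      obtain ⟨h1, h2, h3, h4, h5⟩ := h
      have pos : ∀ j, y u j = true → 1 ≤ j := by
        intro j hj
        by_contra hlt
        have := h2 u j (by omega)
        simp [hj] at this
      obtain ⟨c, hc, hmin⟩ := Int.exists_least_of_bdd (P := fun j => y u j = true)
        ⟨1, pos⟩ ⟨k, h1 u k le_rfl⟩
      have hck := hmin k (h1 u k le_rfl)
      refine ⟨c, pos c hc, hck, (h4 u c (pos c hc) hck).2 ⟨hc, ?_⟩⟩
      rw [← Bool.not_eq_true]
      intro hh
      have := hmin _ hh
      omega
    choose c hc using ex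
    exact ⟨c, twoL_valid h c hc⟩
end

section
/- Window characterization of the distance constraint: for all integers a, b and every positive integer d, the inequality |a − b| ≥ d holds if and only if there is no integer c such that both a and b lie in the window [c, c + d − 1] (that is, c ≤ a ≤ c + d − 1 and c ≤ b ≤ c + d − 1). -/
/-- Window characterization of the distance constraint: `|a - b| ≥ d`
holds iff no length-`d` window `[c, c + d - 1]` contains both `a` and `b`. -/
theorem distance_window_characterization (a b d : ℤ) (hd : 1 ≤ d) :
    |a - b| ≥ d ↔
      ¬ ∃ c : ℤ, (c ≤ a ∧ a ≤ c + d - 1) ∧ (c ≤ b ∧ b ≤ c + d - 1) := by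
  constructor
  · rintro h ⟨c, ⟨h1, h2⟩, h3, h4⟩
    rcases abs_cases (a - b) with ⟨h5, _⟩ | ⟨h5, _⟩ <;> omega
  · intro h
    by_contra hlt
    have hlt' : |a - b| < d := not_le.mp hlt
    obtain ⟨h1, h2⟩ := abs_lt.mp hlt'
    apply h
    rcases le_total a b with hab | hab
    · exact ⟨a, by omega, by omega⟩
    · exact ⟨b, by omega, by omega⟩
end

section
/- Block-encoding range sum inside a block via subtraction (Case 3, backward chain): let f : ℤ → ℕ take only the values 0 and 1, let s ≤ c and c + d − 1 ≤ e be integers (so the range [c, c+d−1] is contained in the block [s,e]), and assume Σ_{i=s}^{e} f(i) ≤ 1. Define the range variables R(a,b) as the Boolean that is true exactly when Σ_{i=a}^{b} f(i) = 1. Then Σ_{i=c}^{c+d−1} f(i) = toNat(R(c,e)) − toNat(R(c+d, e)), and moreover R(c+d,e) = true implies R(c,e) = true (so the subtraction never truncates). -/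
/-- The range variable `R f a b` of the block encoding: true exactly when
the 0/1 function `f` sums to `1` over the integer range `[a, b]`. -/
noncomputable def RangeVar (f : ℤ → ℕ) (a b : ℤ) : Bool :=
  decide (∑ i ∈ Finset.Icc a b, f i = 1)

/-- Block-encoding range sum inside a block via subtraction (Case 3,
backward chain): if the range `[c, c + d - 1]` (with `d ≥ 1`) is contained
in the block `[s, e]`, over which `f` sums to at most `1`, then the range
sum equals `toNat (R(c, e)) - toNat (R(c + d, e))`, and `R(c + d, e)`
implies `R(c, e)`, so the subtraction never truncates. -/
theorem block_range_sum_subtraction (f : ℤ → ℕ)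
    (hf : ∀ i, f i = 0 ∨ f i = 1)
    (s c d e : ℤ) (hd : 1 ≤ d) (hsc : s ≤ c) (hde : c + d - 1 ≤ e)
    (hblock : ∑ i ∈ Finset.Icc s e, f i ≤ 1) :
    (∑ i ∈ Finset.Icc c (c + d - 1), f i
        = (RangeVar f c e).toNat - (RangeVar f (c + d) e).toNat) ∧
    (RangeVar f (c + d) e = true → RangeVar f c e = true) := by
  have h1 : ∑ i ∈ Finset.Icc c e, f i ≤ 1 :=
    le_trans (Finset.sum_le_sum_of_subset (Finset.Icc_subset_Icc_left hsc)) hblock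
  have h2 : ∑ i ∈ Finset.Icc c e, f i
      = ∑ i ∈ Finset.Icc c (c + d - 1), f i + ∑ i ∈ Finset.Icc (c + d) e, f i := by
    rw [← Finset.sum_union]
    · congr 1
      ext x
      simp only [Finset.mem_union, Finset.mem_Icc]
      omega
    · rw [Finset.disjoint_left]
      intro x
      simp only [Finset.mem_Icc]
      omega
  unfold RangeVar
  generalize ∑ i ∈ Finset.Icc c e, f i = A at *
  generalize ∑ i ∈ Finset.Icc c (c + d - 1), f i = B at *
  generalize ∑ i ∈ Finset.Icc (c + d) e, f i = C at *
  have hB : B ≤ 1 := by omega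
  have hC : C ≤ 1 := by omega
  subst h2
  interval_cases B <;> interval_cases C <;> simp_all
end
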